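/- Under the stochastic wide-range Hedge setup, with probability at least 1 − p† the following holds simultaneously for all b ∈ B^e and all actions a ∈ 𝒜 (equivalently all constant maps ψ ∈ Ψ^e, for which ⟨ψ∘p, ℓ̃⟩ = ℓ̃(a)): ∑_{t=1}^T M^t_b·(⟨p^t, ℓ̃^t_b⟩ − ℓ̃^t_b(a)) ≤ η·L̄·∑_{t=1}^T M^t_b·⟨p^t, ℓ̃^t_b⟩ + log((|B^s| + |B^e|)·A / p†)/(η·w_b). -/

import Mathlib

/-!
The total weight of the experts has non-increasing expectation, so by Markov's inequality it
exceeds its initial value by a factor `1 / δ` with probability at most `δ`. Off that event every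
single weight is small, and its logarithm is, up to the discount, a multiple of the regret.

For the drift of the total weight, let `x, y ∈ [0, L]` be the losses, in one round, of the learner
and of an expert. The chords of the exponential function give `exp (-η y) ≤ 1 - c y` and
`exp (η exp (-η L) x) ≤ 1 + c x` with the same slope `c = (1 - exp (-η L)) / L`; this is what the
discount `exp (-η L)` is for. The product of the two bounds is at most `1 + c (x - y)`, which is
linear in the losses, so the losses may be replaced by their conditional means. These are
multiples `S ℓ` of one vector, and stationarity makes the weighted sum of the differences vanish.
-/

open Finset MeasureTheory

/-- Pushforward of a vector `p` on `Fin A` under a map `ψ : Fin A → Fin A`: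
`(ψ∘p)(a) = ∑_{a' : ψ(a') = a} p(a')`. -/
def pushf {A : ℕ} (ψ : Fin A → Fin A) (p : Fin A → ℝ) : Fin A → ℝ :=
  fun a => ∑ a' ∈ Finset.univ.filter (fun a' => ψ a' = a), p a'

/-- Standard inner product on `ℝ^A`. -/
def ip {A : ℕ} (p ℓ : Fin A → ℝ) : ℝ := ∑ a, p a * ℓ a

/-- The set `Ψ^e` of external (constant) modifications on `Fin A`. -/
def PsiE (A : ℕ) : Finset (Fin A → Fin A) :=
  Finset.univ.image fun a => Function.const (Fin A) a

lemma exp_mul_le_one_sub_add_mul_exp {θ : ℝ} (hθ₀ : 0 ≤ θ) (hθ₁ : θ ≤ 1) (z : ℝ) :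
    Real.exp (θ * z) ≤ 1 - θ + θ * Real.exp z := by
  simpa using convexOn_exp.2 (Set.mem_univ 0) (Set.mem_univ z) (sub_nonneg.2 hθ₁) hθ₀ (by ring)

lemma exp_neg_mul_le_one_sub_mul {η L y : ℝ} (hL : 0 < L) (hy : y ∈ Set.Icc 0 L) :
    Real.exp (-η * y) ≤ 1 - (1 - Real.exp (-η * L)) / L * y := by
  calc Real.exp (-η * y) = Real.exp (y / L * (-η * L)) := by congr 1; field_simp
    _ ≤ 1 - y / L + y / L * Real.exp (-η * L) :=
        exp_mul_le_one_sub_add_mul_exp (div_nonneg hy.1 hL.le) ((div_le_one hL).2 hy.2) _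
    _ = 1 - (1 - Real.exp (-η * L)) / L * y := by ring

lemma exp_mul_exp_neg_mul_le_one_add_mul {η L x : ℝ} (hη : 0 ≤ η) (hL : 0 < L)
    (hx : x ∈ Set.Icc 0 L) :
    Real.exp (η * (Real.exp (-η * L) * x)) ≤ 1 + (1 - Real.exp (-η * L)) / L * x := by
  set q := Real.exp (-η * L) with hq
  have hq_le : q ≤ 1 := Real.exp_le_one_iff.2 (by nlinarith)
  have hq_mul : q * Real.exp (η * L) = 1 := by rw [hq, ← Real.exp_add]; simp
  have hendpoint : Real.exp (q * (η * L)) ≤ 2 - q := by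
    linarith [exp_mul_le_one_sub_add_mul_exp (Real.exp_pos _).le hq_le (η * L)]
  have hxL : 0 ≤ x / L := div_nonneg hx.1 hL.le
  calc Real.exp (η * (q * x)) = Real.exp (x / L * (q * (η * L))) := by congr 1; field_simp
    _ ≤ 1 - x / L + x / L * Real.exp (q * (η * L)) :=
        exp_mul_le_one_sub_add_mul_exp hxL ((div_le_one hL).2 hx.2) _
    _ ≤ 1 - x / L + x / L * (2 - q) := by gcongr
    _ = 1 + (1 - q) / L * x := by ring

lemma exp_mul_exp_neg_mul_sub_le {η L x y : ℝ} (hη : 0 ≤ η) (hL : 0 < L)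
    (hx : x ∈ Set.Icc 0 L) (hy : y ∈ Set.Icc 0 L) :
    Real.exp (η * (Real.exp (-η * L) * x - y))
      ≤ 1 + (1 - Real.exp (-η * L)) / L * (x - y) := by
  have hq_le : Real.exp (-η * L) ≤ 1 := Real.exp_le_one_iff.2 (by nlinarith)
  have hX := exp_mul_exp_neg_mul_le_one_add_mul hη hL hx
  have hY := exp_neg_mul_le_one_sub_mul (η := η) hL hy
  set c := (1 - Real.exp (-η * L)) / L
  have hc : 0 ≤ c := div_nonneg (sub_nonneg.2 hq_le) hL.le
  calc Real.exp (η * (Real.exp (-η * L) * x - y))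
      = Real.exp (η * (Real.exp (-η * L) * x)) * Real.exp (-η * y) := by
        rw [← Real.exp_add]; ring_nf
    _ ≤ (1 + c * x) * (1 - c * y) :=
        mul_le_mul hX hY (Real.exp_pos _).le ((Real.exp_pos _).le.trans hX)
    _ = 1 + c * (x - y) - c * x * (c * y) := by ring
    _ ≤ 1 + c * (x - y) := sub_le_self _ (mul_nonneg (mul_nonneg hc hx.1) (mul_nonneg hc hy.1))

lemma sum_mul_sub_le_of_sum_discounted_le {α : Type*} {s : Finset α} {M x y : α → ℝ}
    {w η L C : ℝ} (hw : 0 < w) (hMx : ∀ t ∈ s, 0 ≤ M t * x t)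
    (h : ∑ t ∈ s, (Real.exp (-η * L) * (w * M t * x t) - w * M t * y t) ≤ C / η) :
    ∑ t ∈ s, M t * (x t - y t) ≤ η * L * ∑ t ∈ s, M t * x t + C / (η * w) := by
  set X := ∑ t ∈ s, M t * x t with hX
  set Y := ∑ t ∈ s, M t * y t with hY
  have hregret : ∑ t ∈ s, M t * (x t - y t) = X - Y := by
    simp only [mul_sub, Finset.sum_sub_distrib, hX, hY]
  have hdiscounted : Real.exp (-η * L) * X - Y ≤ C / (η * w) := by
    rw [← div_div, le_div_iff₀ hw]
    refine le_of_eq_of_le ?_ h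
    simp only [hX, hY, Finset.sum_sub_distrib, mul_assoc, ← Finset.mul_sum]
    ring
  have hexp : (1 - η * L) * X ≤ Real.exp (-η * L) * X :=
    mul_le_mul_of_nonneg_right (by linarith [Real.add_one_le_exp (-η * L)])
      (Finset.sum_nonneg hMx)
  linarith

section Simplex

variable {A : ℕ} {p : Fin A → ℝ}

lemma pushf_mem_stdSimplex (ψ : Fin A → Fin A) (hp : p ∈ stdSimplex ℝ (Fin A)) :
    pushf ψ p ∈ stdSimplex ℝ (Fin A) :=
  ⟨fun _ => Finset.sum_nonneg fun i _ => hp.1 i,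
    (Finset.sum_fiberwise Finset.univ ψ p).trans hp.2⟩

lemma ip_pushf_const (a : Fin A) (hp : p ∈ stdSimplex ℝ (Fin A)) (l : Fin A → ℝ) :
    ip (pushf (Function.const (Fin A) a) p) l = l a := by
  have hdirac : pushf (Function.const (Fin A) a) p = Pi.single a 1 := by
    ext a'
    by_cases h : a = a' <;> simp [pushf, h, eq_comm, hp.2]
  simp [ip, hdirac, Pi.single_apply]

lemma ip_nonneg {l : Fin A → ℝ} (hp : ∀ a, 0 ≤ p a) (hl : ∀ a, 0 ≤ l a) : 0 ≤ ip p l :=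
  Finset.sum_nonneg fun a _ => mul_nonneg (hp a) (hl a)

lemma mul_ip_mem_Icc {l : Fin A → ℝ} {S L : ℝ} (hp : p ∈ stdSimplex ℝ (Fin A))
    (hl : ∀ a, S * l a ∈ Set.Icc 0 L) : S * ip p l ∈ Set.Icc 0 L := by
  have hmean : S * ip p l = ∑ a, p a • (S * l a) := by
    simp only [ip, Finset.mul_sum, smul_eq_mul, mul_left_comm]
  rw [hmean]
  exact (convex_Icc 0 L).sum_mem (fun a _ => hp.1 a) hp.2 fun a _ => hl a

lemma sum_mul_ip_congr {ι : Type*} {I : Finset ι} {v : ι → ℝ} {p q : ι → Fin A → ℝ}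
    (h : ∀ a, ∑ i ∈ I, v i * p i a = ∑ i ∈ I, v i * q i a) (l : Fin A → ℝ) :
    ∑ i ∈ I, v i * ip (p i) l = ∑ i ∈ I, v i * ip (q i) l := by
  simp only [ip, Finset.mul_sum, ← mul_assoc]
  rw [Finset.sum_comm, Finset.sum_comm (s := I)]
  simp only [← Finset.sum_mul, h]

lemma measurable_pushf {Ω : Type*} {_ : MeasurableSpace Ω} {p : Ω → Fin A → ℝ}
    (ψ : Fin A → Fin A) (hp : ∀ a, Measurable fun ω => p ω a) (a : Fin A) :
    Measurable fun ω => pushf ψ (p ω) a :=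
  Finset.measurable_fun_sum _ fun i _ => hp i

lemma measurable_ip {Ω : Type*} {_ : MeasurableSpace Ω} {p l : Ω → Fin A → ℝ}
    (hp : ∀ a, Measurable fun ω => p ω a) (hl : ∀ a, Measurable fun ω => l ω a) :
    Measurable fun ω => ip (p ω) (l ω) :=
  Finset.measurable_fun_sum _ fun a _ => (hp a).mul (hl a)

end Simplex

section CondExp

variable {Ω : Type*} {m m₀ : MeasurableSpace Ω} {μ : Measure Ω}

lemma integral_mul_condExp (hm : m ≤ m₀) [SigmaFinite (μ.trim hm)] {f g : Ω → ℝ}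
    (hf : StronglyMeasurable[m] f) (hfg : Integrable (f * g) μ) (hg : Integrable g μ) :
    ∫ ω, f ω * (μ[g | m]) ω ∂μ = ∫ ω, f ω * g ω ∂μ :=
  (integral_congr_ae (condExp_mul_of_stronglyMeasurable_left hf hfg hg).symm).trans
    (integral_condExp hm)

lemma integral_sum_mul_nonpos_of_condExp (hm : m ≤ m₀) [SigmaFinite (μ.trim hm)] {ι : Type*}
    {I : Finset ι} {V Z : ι → Ω → ℝ} (hV : ∀ i ∈ I, StronglyMeasurable[m] (V i))
    (hVZ : ∀ i ∈ I, Integrable (V i * Z i) μ) (hZ : ∀ i ∈ I, Integrable (Z i) μ)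
    (hdrift : ∀ᵐ ω ∂μ, ∑ i ∈ I, V i ω * (μ[Z i | m]) ω ≤ 0) :
    ∫ ω, ∑ i ∈ I, V i ω * Z i ω ∂μ ≤ 0 := by
  have hVcond : ∀ i ∈ I, Integrable (fun ω => V i ω * (μ[Z i | m]) ω) μ := fun i hi =>
    integrable_condExp.congr
      (condExp_mul_of_stronglyMeasurable_left (hV i hi) (hVZ i hi) (hZ i hi))
  calc ∫ ω, ∑ i ∈ I, V i ω * Z i ω ∂μ
      = ∑ i ∈ I, ∫ ω, V i ω * Z i ω ∂μ := integral_finsetSum _ hVZ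
    _ = ∑ i ∈ I, ∫ ω, V i ω * (μ[Z i | m]) ω ∂μ := Finset.sum_congr rfl fun i hi =>
        (integral_mul_condExp hm (hV i hi) (hVZ i hi) (hZ i hi)).symm
    _ = ∫ ω, ∑ i ∈ I, V i ω * (μ[Z i | m]) ω ∂μ := (integral_finsetSum _ hVcond).symm
    _ ≤ 0 := integral_nonpos_of_ae hdrift

lemma condExp_ip (hm : m ≤ m₀) {A : ℕ} {u l : Ω → Fin A → ℝ} {K : ℝ}
    (hu : ∀ a, Measurable[m] fun ω => u ω a) (huK : ∀ ω a, |u ω a| ≤ K)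
    (hl : ∀ a, Integrable (fun ω => l ω a) μ) :
    μ[fun ω => ip (u ω) (l ω) | m] =ᵐ[μ]
      fun ω => ip (u ω) fun a => (μ[fun ω => l ω a | m]) ω := by
  have hint : ∀ a, Integrable ((fun ω => u ω a) * fun ω => l ω a) μ := fun a =>
    (hl a).bdd_mul ((hu a).mono hm le_rfl).aestronglyMeasurable
      (Filter.Eventually.of_forall fun ω => huK ω a)
  have hpull : ∀ᵐ ω ∂μ, ∀ a, (μ[(fun ω => u ω a) * fun ω => l ω a | m]) ω
      = u ω a * (μ[fun ω => l ω a | m]) ω :=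
    ae_all_iff.2 fun a =>
      condExp_mul_of_stronglyMeasurable_left (hu a).stronglyMeasurable (hint a) (hl a)
  have hip : (fun ω => ip (u ω) (l ω)) = ∑ a, (fun ω => u ω a) * fun ω => l ω a := by
    ext ω
    simp [ip]
  rw [hip]
  filter_upwards [condExp_finsetSum (s := Finset.univ) (fun a _ => hint a) m, hpull] with ω hsum hω
  simp only [hsum, Finset.sum_apply, hω, ip]

/- Integrability of the product `S • l` is all that a bound on it gives: for `S = 0` the bound says
nothing about `l`. -/
lemma condExp_mul_ip_sub (hm : m ≤ m₀) {A : ℕ} {p q l ℓ : Ω → Fin A → ℝ} {S : ℝ}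
    (hp : ∀ a, Measurable[m] fun ω => p ω a) (hpΔ : ∀ ω, p ω ∈ stdSimplex ℝ (Fin A))
    (hq : ∀ a, Measurable[m] fun ω => q ω a) (hqΔ : ∀ ω, q ω ∈ stdSimplex ℝ (Fin A))
    (hl : ∀ a, Integrable (fun ω => S * l ω a) μ)
    (hℓ : ∀ a, μ[fun ω => l ω a | m] =ᵐ[μ] fun ω => ℓ ω a) :
    μ[fun ω => S * ip (p ω) (l ω) - S * ip (q ω) (l ω) | m] =ᵐ[μ]
      fun ω => S * (ip (p ω) (ℓ ω) - ip (q ω) (ℓ ω)) := by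
  have hlin : ∀ (u v l : Fin A → ℝ), S * (ip u l - ip v l) = ip (u - v) fun a => S * l a := by
    intro u v l
    simp only [ip, ← Finset.sum_sub_distrib, Finset.mul_sum, Pi.sub_apply]
    exact Finset.sum_congr rfl fun a _ => by ring
  have hbdd : ∀ ω a, |(p ω - q ω) a| ≤ 1 := fun ω a => by
    have hpa := mem_Icc_of_mem_stdSimplex (hpΔ ω) a
    have hqa := mem_Icc_of_mem_stdSimplex (hqΔ ω) a
    exact abs_sub_le_of_nonneg_of_le hpa.1 hpa.2 hqa.1 hqa.2
  have hscaled : ∀ᵐ ω ∂μ, ∀ a, (μ[fun ω => S * l ω a | m]) ω = S * ℓ ω a :=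
    ae_all_iff.2 fun a => by
      filter_upwards [condExp_smul (μ := μ) S (fun ω => l ω a) m, hℓ a] with ω hsmul hω
      exact hsmul.trans (congrArg (S * ·) hω)
  have hscaled_ip : (fun ω => S * ip (p ω) (l ω) - S * ip (q ω) (l ω))
      = fun ω => ip (p ω - q ω) fun a => S * l ω a := by
    simp only [← mul_sub, hlin]
  rw [hscaled_ip]
  have hpull := condExp_ip (u := fun ω => p ω - q ω) hm (fun a => (hp a).sub (hq a)) hbdd hl
  filter_upwards [hpull, hscaled] with ω hpullω hω
  simp only [hpullω, hω, hlin]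

lemma sum_mul_condExp_eq_zero_of_stationary (hm : m ≤ m₀) {ι : Type*} {I : Finset ι} {A : ℕ}
    {p ℓ : Ω → Fin A → ℝ} {q l : ι → Ω → Fin A → ℝ} {S : ι → ℝ} {V : ι → Ω → ℝ}
    (hp : ∀ a, Measurable[m] fun ω => p ω a) (hpΔ : ∀ ω, p ω ∈ stdSimplex ℝ (Fin A))
    (hq : ∀ i ∈ I, ∀ a, Measurable[m] fun ω => q i ω a)
    (hqΔ : ∀ i ∈ I, ∀ ω, q i ω ∈ stdSimplex ℝ (Fin A))
    (hl : ∀ i ∈ I, ∀ a, Integrable (fun ω => S i * l i ω a) μ)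
    (hℓ : ∀ i ∈ I, ∀ a, μ[fun ω => l i ω a | m] =ᵐ[μ] fun ω => ℓ ω a)
    (hstat : ∀ᵐ ω ∂μ, ∀ a,
      ∑ i ∈ I, V i ω * S i * p ω a = ∑ i ∈ I, V i ω * S i * q i ω a) :
    ∀ᵐ ω ∂μ, ∑ i ∈ I,
      V i ω * (μ[fun ω => S i * ip (p ω) (l i ω) - S i * ip (q i ω) (l i ω) | m]) ω = 0 := by
  have hcond := (Finset.eventually_all I).2 fun i hi =>
    condExp_mul_ip_sub hm hp hpΔ (hq i hi) (hqΔ i hi) (hl i hi) (hℓ i hi)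
  filter_upwards [hcond, hstat] with ω hω hstatω
  rw [Finset.sum_congr rfl fun i hi => congrArg (V i ω * ·) (hω i hi)]
  simp only [← mul_assoc, mul_sub, Finset.sum_sub_distrib]
  exact sub_eq_zero.2 (sum_mul_ip_congr hstatω (ℓ ω))

end CondExp

lemma integrable_of_ae_mem_Icc {Ω : Type*} {_ : MeasurableSpace Ω} {μ : Measure Ω}
    [IsFiniteMeasure μ] {f : Ω → ℝ} {L : ℝ} (hf : AEStronglyMeasurable f μ)
    (hfL : ∀ᵐ ω ∂μ, f ω ∈ Set.Icc 0 L) : Integrable f μ :=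
  .of_bound hf L (hfL.mono fun _ h => (Real.norm_of_nonneg h.1).trans_le h.2)

lemma ofReal_one_sub_le_measure_lt_of_integral_le {Ω : Type*} {_ : MeasurableSpace Ω}
    {μ : Measure Ω} [IsProbabilityMeasure μ] {f : Ω → ℝ} {C δ : ℝ} (hf₀ : 0 ≤ᵐ[μ] f)
    (hf : Integrable f μ) (hC : 0 < C) (hδ : 0 < δ) (hfC : ∫ ω, f ω ∂μ ≤ C) :
    ENNReal.ofReal (1 - δ) ≤ μ {ω | f ω < C / δ} := by
  have hmarkov : μ.real {ω | C / δ ≤ f ω} ≤ δ := by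
    refine le_of_mul_le_mul_left ?_ (div_pos hC hδ)
    rw [div_mul_cancel₀ _ hδ.ne']
    exact (mul_meas_ge_le_integral_of_nonneg hf₀ hf _).trans hfC
  have hcompl : {ω | f ω < C / δ}ᶜ = {ω | C / δ ≤ f ω} := by
    simp only [Set.compl_ofPred, not_lt]
  have hbad : μ {ω | f ω < C / δ}ᶜ ≤ ENNReal.ofReal δ := by
    rw [hcompl, ← ofReal_measureReal]
    exact ENNReal.ofReal_le_ofReal hmarkov
  rw [ENNReal.ofReal_sub _ hδ.le, ENNReal.ofReal_one, tsub_le_iff_right, ← measure_univ (μ := μ)]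
  exact (measure_univ_le_add_compl _).trans (by gcongr)

/-- The gain in round `t` of an expert with losses `Y` over a learner with losses `X`, where the
losses of the learner are discounted by `exp (-η L)`; here `η` is the learning rate and `L` a bound
on the losses. -/
noncomputable def discountedGain {Ω : Type*} (η L : ℝ) (X Y : ℕ → Ω → ℝ) (t : ℕ) (ω : Ω) : ℝ :=
  Real.exp (-η * L) * X t ω - Y t ω

/-- The exponential weight, after `t` rounds, of an expert with prior weight `w₀` and gains `G`;
rounds are numbered from `1`. -/
noncomputable def expWeight {Ω : Type*} (η w₀ : ℝ) (G : ℕ → Ω → ℝ) (t : ℕ) (ω : Ω) : ℝ :=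
  w₀ * Real.exp (η * ∑ s ∈ Finset.Icc 1 t, G s ω)

section ExpWeight

variable {Ω : Type*} {η w₀ : ℝ} {G : ℕ → Ω → ℝ}

lemma expWeight_zero (ω : Ω) : expWeight η w₀ G 0 ω = w₀ := by
  simp [expWeight]

lemma expWeight_succ (t : ℕ) (ω : Ω) :
    expWeight η w₀ G (t + 1) ω = expWeight η w₀ G t ω * Real.exp (η * G (t + 1) ω) := by
  rw [expWeight, expWeight, Finset.sum_Icc_succ_top (by lia), mul_add, Real.exp_add, mul_assoc]

lemma expWeight_nonneg (hw₀ : 0 ≤ w₀) (t : ℕ) (ω : Ω) : 0 ≤ expWeight η w₀ G t ω :=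
  mul_nonneg hw₀ (Real.exp_pos _).le

lemma sum_le_log_div_of_expWeight_lt {N : ℝ} {t : ℕ} {ω : Ω} (hη : 0 < η) (hw₀ : 0 < w₀)
    (h : expWeight η w₀ G t ω < N) :
    ∑ s ∈ Finset.Icc 1 t, G s ω ≤ Real.log (N / w₀) / η := by
  rw [le_div_iff₀' hη]
  have hexp : Real.exp (η * ∑ s ∈ Finset.Icc 1 t, G s ω) ≤ N / w₀ := (le_div_iff₀' hw₀).2 h.le
  exact (Real.le_log_iff_exp_le ((Real.exp_pos _).trans_le hexp)).2 hexp

variable {m₀ : MeasurableSpace Ω} {μ : Measure Ω} {𝔉 : Filtration ℕ m₀} {t : ℕ}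

lemma measurable_expWeight (hG : ∀ s ∈ Finset.Icc 1 t, Measurable[𝔉 s] (G s)) :
    Measurable[𝔉 t] (expWeight η w₀ G t) :=
  (Real.measurable_exp.comp ((Finset.measurable_fun_sum _ fun s hs =>
    (hG s hs).mono (𝔉.mono (Finset.mem_Icc.1 hs).2) le_rfl).const_mul η)).const_mul w₀

lemma integrable_expWeight [IsFiniteMeasure μ] {K : ℝ} (hη : 0 ≤ η)
    (hG : ∀ s ∈ Finset.Icc 1 t, Measurable[𝔉 s] (G s))
    (hGK : ∀ s ∈ Finset.Icc 1 t, ∀ᵐ ω ∂μ, G s ω ≤ K) :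
    Integrable (expWeight η w₀ G t) μ := by
  refine .of_bound ((measurable_expWeight hG).mono (𝔉.le t) le_rfl).aestronglyMeasurable
    (|w₀| * Real.exp (η * ∑ _s ∈ Finset.Icc 1 t, K)) ?_
  filter_upwards [(Finset.eventually_all _).2 hGK] with ω hω
  rw [expWeight, Real.norm_eq_abs, abs_mul, Real.abs_exp]
  gcongr with s hs
  exact hω s hs

lemma ofReal_one_sub_le_measure_sum_gain_le [IsProbabilityMeasure μ] {ι : Type*} {I : Finset ι}
    {w₀ : ι → ℝ} {G : ι → ℕ → Ω → ℝ} {δ : ℝ} (hη : 0 < η) (hδ : 0 < δ)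
    (hw₀ : ∀ i ∈ I, 0 < w₀ i) (hint : ∀ i ∈ I, Integrable (expWeight η (w₀ i) (G i) t) μ)
    (hle : ∫ ω, ∑ i ∈ I, expWeight η (w₀ i) (G i) t ω ∂μ ≤ ∑ i ∈ I, w₀ i) :
    ENNReal.ofReal (1 - δ) ≤ μ {ω | ∀ i ∈ I,
      ∑ s ∈ Finset.Icc 1 t, G i s ω ≤ Real.log ((∑ j ∈ I, w₀ j) / (δ * w₀ i)) / η} := by
  rcases I.eq_empty_or_nonempty with rfl | hI
  · simp [hδ.le]
  have hnonneg : ∀ i ∈ I, ∀ ω, 0 ≤ expWeight η (w₀ i) (G i) t ω := fun i hi =>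
    expWeight_nonneg (hw₀ i hi).le t
  refine (ofReal_one_sub_le_measure_lt_of_integral_le
    (.of_forall fun ω => Finset.sum_nonneg fun i hi => hnonneg i hi ω)
    (integrable_finsetSum _ hint) (Finset.sum_pos hw₀ hI) hδ hle).trans
    (measure_mono fun ω hω i hi => ?_)
  have hlt : expWeight η (w₀ i) (G i) t ω < (∑ j ∈ I, w₀ j) / δ :=
    (Finset.single_le_sum (fun j hj => hnonneg j hj ω) hi).trans_lt hω
  rw [← div_div]
  exact sum_le_log_div_of_expWeight_lt hη (hw₀ i hi) hlt

end ExpWeight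

section Drift

variable {Ω ι : Type*} {m m₀ : MeasurableSpace Ω} {μ : Measure Ω} {I : Finset ι}
  {η L : ℝ}

lemma sum_mul_exp_le {V x y : ι → ℝ} (hη : 0 ≤ η) (hL : 0 < L) (hV : ∀ i ∈ I, 0 ≤ V i)
    (hx : ∀ i ∈ I, x i ∈ Set.Icc 0 L) (hy : ∀ i ∈ I, y i ∈ Set.Icc 0 L) :
    ∑ i ∈ I, V i * Real.exp (η * (Real.exp (-η * L) * x i - y i))
      ≤ ∑ i ∈ I, V i + (1 - Real.exp (-η * L)) / L * ∑ i ∈ I, V i * (x i - y i) := by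
  rw [Finset.mul_sum, ← Finset.sum_add_distrib]
  refine Finset.sum_le_sum fun i hi => ?_
  calc V i * Real.exp (η * (Real.exp (-η * L) * x i - y i))
      ≤ V i * (1 + (1 - Real.exp (-η * L)) / L * (x i - y i)) :=
        mul_le_mul_of_nonneg_left (exp_mul_exp_neg_mul_sub_le hη hL (hx i hi) (hy i hi)) (hV i hi)
    _ = V i + (1 - Real.exp (-η * L)) / L * (V i * (x i - y i)) := by ring

lemma integral_sum_mul_exp_le [IsFiniteMeasure μ] (hm : m ≤ m₀) {V X Y : ι → Ω → ℝ}
    (hη : 0 ≤ η) (hL : 0 < L)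
    (hV₀ : ∀ i ∈ I, ∀ ω, 0 ≤ V i ω) (hV : ∀ i ∈ I, StronglyMeasurable[m] (V i))
    (hVint : ∀ i ∈ I, Integrable (V i) μ)
    (hX : ∀ i ∈ I, AEStronglyMeasurable[m₀] (X i) μ)
    (hXL : ∀ i ∈ I, ∀ᵐ ω ∂μ, X i ω ∈ Set.Icc 0 L)
    (hY : ∀ i ∈ I, AEStronglyMeasurable[m₀] (Y i) μ)
    (hYL : ∀ i ∈ I, ∀ᵐ ω ∂μ, Y i ω ∈ Set.Icc 0 L)
    (hdrift : ∀ᵐ ω ∂μ, ∑ i ∈ I, V i ω * (μ[X i - Y i | m]) ω ≤ 0) :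
    ∫ ω, ∑ i ∈ I, V i ω * Real.exp (η * (Real.exp (-η * L) * X i ω - Y i ω)) ∂μ
      ≤ ∫ ω, ∑ i ∈ I, V i ω ∂μ := by
  set c := (1 - Real.exp (-η * L)) / L
  have hc : 0 ≤ c := div_nonneg (sub_nonneg.2 (Real.exp_le_one_iff.2 (by nlinarith))) hL.le
  have hsub : ∀ i ∈ I, Integrable (X i - Y i) μ := fun i hi =>
    (integrable_of_ae_mem_Icc (hX i hi) (hXL i hi)).sub
      (integrable_of_ae_mem_Icc (hY i hi) (hYL i hi))
  have hVsub : ∀ i ∈ I, Integrable (V i * (X i - Y i)) μ := fun i hi =>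
    (hVint i hi).mul_bdd (c := L) (hsub i hi).aestronglyMeasurable <| by
      filter_upwards [hXL i hi, hYL i hi] with ω hx hy
      exact abs_sub_le_of_nonneg_of_le hx.1 hx.2 hy.1 hy.2
  have hΦ : Integrable (fun ω => ∑ i ∈ I, V i ω) μ := integrable_finsetSum _ hVint
  have hlin : Integrable (fun ω => c * ∑ i ∈ I, V i ω * (X i - Y i) ω) μ :=
    (integrable_finsetSum _ hVsub).const_mul c
  calc ∫ ω, ∑ i ∈ I, V i ω * Real.exp (η * (Real.exp (-η * L) * X i ω - Y i ω)) ∂μ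
      ≤ ∫ ω, (∑ i ∈ I, V i ω + c * ∑ i ∈ I, V i ω * (X i - Y i) ω) ∂μ := by
        refine integral_mono_of_nonneg (.of_forall fun ω => Finset.sum_nonneg fun i hi =>
          mul_nonneg (hV₀ i hi ω) (Real.exp_pos _).le) (hΦ.add hlin) ?_
        filter_upwards [(Finset.eventually_all I).2 hXL, (Finset.eventually_all I).2 hYL]
          with ω hx hy
        exact sum_mul_exp_le hη hL (fun i hi => hV₀ i hi ω) hx hy
    _ = ∫ ω, ∑ i ∈ I, V i ω ∂μ + c * ∫ ω, ∑ i ∈ I, V i ω * (X i - Y i) ω ∂μ := by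
        rw [integral_add hΦ hlin, integral_const_mul]
    _ ≤ ∫ ω, ∑ i ∈ I, V i ω ∂μ := add_le_of_nonpos_right <|
        mul_nonpos_of_nonneg_of_nonpos hc <|
          integral_sum_mul_nonpos_of_condExp hm hV hVsub hsub hdrift

end Drift

section DiscountedGain

variable {Ω : Type*} {m₀ : MeasurableSpace Ω} {η L : ℝ}

lemma measurable_discountedGain {X Y : ℕ → Ω → ℝ} {t : ℕ} (hX : Measurable (X t))
    (hY : Measurable (Y t)) : Measurable (discountedGain η L X Y t) :=
  (hX.const_mul _).sub hY

variable {μ : Measure Ω} {𝔉 : Filtration ℕ m₀}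

lemma integrable_expWeight_discountedGain [IsFiniteMeasure μ] {X Y : ℕ → Ω → ℝ} {w₀ : ℝ} {t : ℕ}
    (hη : 0 ≤ η)
    (hX : ∀ s ∈ Finset.Icc 1 t, Measurable[𝔉 s] (X s))
    (hXL : ∀ s ∈ Finset.Icc 1 t, ∀ᵐ ω ∂μ, X s ω ∈ Set.Icc 0 L)
    (hY : ∀ s ∈ Finset.Icc 1 t, Measurable[𝔉 s] (Y s))
    (hYL : ∀ s ∈ Finset.Icc 1 t, ∀ᵐ ω ∂μ, Y s ω ∈ Set.Icc 0 L) :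
    Integrable (expWeight η w₀ (discountedGain η L X Y) t) μ := by
  refine integrable_expWeight (K := Real.exp (-η * L) * L) hη
    (fun s hs => measurable_discountedGain (hX s hs) (hY s hs)) fun s hs => ?_
  filter_upwards [hXL s hs, hYL s hs] with ω hx hy
  exact (sub_le_self _ hy.1).trans (mul_le_mul_of_nonneg_left hx.2 (Real.exp_pos _).le)

lemma integral_sum_expWeight_le [IsProbabilityMeasure μ] {ι : Type*} {I : Finset ι} {T : ℕ}
    {w₀ : ι → ℝ} {X Y : ι → ℕ → Ω → ℝ} (hη : 0 ≤ η) (hL : 0 < L) (hw₀ : ∀ i ∈ I, 0 ≤ w₀ i)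
    (hX : ∀ i ∈ I, ∀ t ∈ Finset.Icc 1 T, Measurable[𝔉 t] (X i t))
    (hXL : ∀ i ∈ I, ∀ t ∈ Finset.Icc 1 T, ∀ᵐ ω ∂μ, X i t ω ∈ Set.Icc 0 L)
    (hY : ∀ i ∈ I, ∀ t ∈ Finset.Icc 1 T, Measurable[𝔉 t] (Y i t))
    (hYL : ∀ i ∈ I, ∀ t ∈ Finset.Icc 1 T, ∀ᵐ ω ∂μ, Y i t ω ∈ Set.Icc 0 L)
    (hdrift : ∀ t ∈ Finset.Icc 1 T, ∀ᵐ ω ∂μ, ∑ i ∈ I,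
      expWeight η (w₀ i) (discountedGain η L (X i) (Y i)) (t - 1) ω
        * (μ[X i t - Y i t | 𝔉 (t - 1)]) ω ≤ 0) :
    ∫ ω, ∑ i ∈ I, expWeight η (w₀ i) (discountedGain η L (X i) (Y i)) T ω ∂μ
      ≤ ∑ i ∈ I, w₀ i := by
  induction T with
  | zero => simp [expWeight_zero]
  | succ T ih =>
    have hsub : Finset.Icc 1 T ⊆ Finset.Icc 1 (T + 1) := Finset.Icc_subset_Icc_right T.le_succ
    have hlast : T + 1 ∈ Finset.Icc 1 (T + 1) := Finset.right_mem_Icc.2 (by lia)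
    have hstep : ∫ ω, ∑ i ∈ I, expWeight η (w₀ i) (discountedGain η L (X i) (Y i)) (T + 1) ω ∂μ
        ≤ ∫ ω, ∑ i ∈ I, expWeight η (w₀ i) (discountedGain η L (X i) (Y i)) T ω ∂μ := by
      have hV : ∀ i ∈ I, Measurable[𝔉 T]
          (expWeight η (w₀ i) (discountedGain η L (X i) (Y i)) T) := fun i hi =>
        measurable_expWeight fun s hs =>
          measurable_discountedGain (hX i hi s (hsub hs)) (hY i hi s (hsub hs))
      have hVint : ∀ i ∈ I, Integrable
          (expWeight η (w₀ i) (discountedGain η L (X i) (Y i)) T) μ := fun i hi =>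
        integrable_expWeight_discountedGain hη
          (fun s hs => hX i hi s (hsub hs)) (fun s hs => hXL i hi s (hsub hs))
          (fun s hs => hY i hi s (hsub hs)) (fun s hs => hYL i hi s (hsub hs))
      have hdriftT := hdrift _ hlast
      rw [Nat.add_sub_cancel] at hdriftT
      simp only [expWeight_succ]
      exact integral_sum_mul_exp_le (X := fun i => X i (T + 1)) (Y := fun i => Y i (T + 1))
        (𝔉.le T) hη hL
        (fun i hi => expWeight_nonneg (hw₀ i hi) T) (fun i hi => (hV i hi).stronglyMeasurable) hVint
        (fun i hi => ((hX i hi _ hlast).mono (𝔉.le _) le_rfl).aestronglyMeasurable)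
        (fun i hi => hXL i hi _ hlast)
        (fun i hi => ((hY i hi _ hlast).mono (𝔉.le _) le_rfl).aestronglyMeasurable)
        (fun i hi => hYL i hi _ hlast) hdriftT
    exact hstep.trans <|
      ih (fun i hi t ht => hX i hi t (hsub ht)) (fun i hi t ht => hXL i hi t (hsub ht))
        (fun i hi t ht => hY i hi t (hsub ht)) (fun i hi t ht => hYL i hi t (hsub ht))
        fun t ht => hdrift t (hsub ht)

end DiscountedGain

/-- The loss `S ⟨p, l⟩` in each round of the mixed action `p` when the loss vector `l` is scaled
by `S`. -/
def scaledLoss {A : ℕ} {Ω : Type*} (S : ℕ → ℝ) (p l : ℕ → Ω → Fin A → ℝ) (t : ℕ) (ω : Ω) : ℝ :=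
  S t * ip (p t ω) (l t ω)

section ScaledLoss

variable {A : ℕ} {Ω : Type*} {m₀ : MeasurableSpace Ω} {μ : Measure Ω}

lemma measurable_scaledLoss {S : ℕ → ℝ} {p l : ℕ → Ω → Fin A → ℝ} {t : ℕ}
    (hp : ∀ a, Measurable fun ω => p t ω a) (hl : ∀ a, Measurable fun ω => l t ω a) :
    Measurable (scaledLoss S p l t) :=
  (measurable_ip hp hl).const_mul (S t)

lemma ae_scaledLoss_mem_Icc {S : ℕ → ℝ} {p l : ℕ → Ω → Fin A → ℝ} {t : ℕ} {L : ℝ}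
    (hp : ∀ ω, p t ω ∈ stdSimplex ℝ (Fin A))
    (hl : ∀ a, ∀ᵐ ω ∂μ, S t * l t ω a ∈ Set.Icc 0 L) :
    ∀ᵐ ω ∂μ, scaledLoss S p l t ω ∈ Set.Icc 0 L :=
  (ae_all_iff.2 hl).mono fun ω hω => mul_ip_mem_Icc (hp ω) hω

theorem ofReal_one_sub_le_measure_sum_discountedGain_le [IsProbabilityMeasure μ]
    {𝔉 : Filtration ℕ m₀} {ι : Type*} {I : Finset ι} {T : ℕ} {η L δ : ℝ} {w₀ : ι → ℝ}
    {S : ι → ℕ → ℝ} {p ℓ : ℕ → Ω → Fin A → ℝ} {q l : ι → ℕ → Ω → Fin A → ℝ}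
    (hη : 0 < η) (hL : 0 < L) (hδ : 0 < δ)
    (hw₀ : ∀ i ∈ I, 0 < w₀ i)
    (hp : ∀ t ∈ Finset.Icc 1 T, ∀ a, Measurable[𝔉 (t - 1)] fun ω => p t ω a)
    (hpΔ : ∀ t ∈ Finset.Icc 1 T, ∀ ω, p t ω ∈ stdSimplex ℝ (Fin A))
    (hq : ∀ i ∈ I, ∀ t ∈ Finset.Icc 1 T, ∀ a, Measurable[𝔉 (t - 1)] fun ω => q i t ω a)
    (hqΔ : ∀ i ∈ I, ∀ t ∈ Finset.Icc 1 T, ∀ ω, q i t ω ∈ stdSimplex ℝ (Fin A))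
    (hl : ∀ i ∈ I, ∀ t ∈ Finset.Icc 1 T, ∀ a, Measurable[𝔉 t] fun ω => l i t ω a)
    (hlL : ∀ i ∈ I, ∀ t ∈ Finset.Icc 1 T, ∀ a, ∀ᵐ ω ∂μ, S i t * l i t ω a ∈ Set.Icc 0 L)
    (hℓ : ∀ i ∈ I, ∀ t ∈ Finset.Icc 1 T, ∀ a,
      μ[fun ω => l i t ω a | 𝔉 (t - 1)] =ᵐ[μ] fun ω => ℓ t ω a)
    (hstat : ∀ t ∈ Finset.Icc 1 T, ∀ᵐ ω ∂μ, ∀ a,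
      ∑ i ∈ I, expWeight η (w₀ i) (discountedGain η L (scaledLoss (S i) p (l i))
          (scaledLoss (S i) (q i) (l i))) (t - 1) ω * S i t * p t ω a
        = ∑ i ∈ I, expWeight η (w₀ i) (discountedGain η L (scaledLoss (S i) p (l i))
          (scaledLoss (S i) (q i) (l i))) (t - 1) ω * S i t * q i t ω a) :
    ENNReal.ofReal (1 - δ) ≤ μ {ω | ∀ i ∈ I,
      ∑ t ∈ Finset.Icc 1 T, discountedGain η L (scaledLoss (S i) p (l i))
          (scaledLoss (S i) (q i) (l i)) t ω
        ≤ Real.log ((∑ j ∈ I, w₀ j) / (δ * w₀ i)) / η} := by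
  have hmono : ∀ t, 𝔉 (t - 1) ≤ 𝔉 t := fun t => 𝔉.mono (t.sub_le 1)
  have hX : ∀ i ∈ I, ∀ t ∈ Finset.Icc 1 T, Measurable[𝔉 t] (scaledLoss (S i) p (l i) t) :=
    fun i hi t ht =>
      measurable_scaledLoss (fun a => (hp t ht a).mono (hmono t) le_rfl) (hl i hi t ht)
  have hXL : ∀ i ∈ I, ∀ t ∈ Finset.Icc 1 T,
      ∀ᵐ ω ∂μ, scaledLoss (S i) p (l i) t ω ∈ Set.Icc 0 L :=
    fun i hi t ht => ae_scaledLoss_mem_Icc (hpΔ t ht) (hlL i hi t ht)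
  have hY : ∀ i ∈ I, ∀ t ∈ Finset.Icc 1 T, Measurable[𝔉 t] (scaledLoss (S i) (q i) (l i) t) :=
    fun i hi t ht =>
      measurable_scaledLoss (fun a => (hq i hi t ht a).mono (hmono t) le_rfl) (hl i hi t ht)
  have hYL : ∀ i ∈ I, ∀ t ∈ Finset.Icc 1 T,
      ∀ᵐ ω ∂μ, scaledLoss (S i) (q i) (l i) t ω ∈ Set.Icc 0 L :=
    fun i hi t ht => ae_scaledLoss_mem_Icc (hqΔ i hi t ht) (hlL i hi t ht)
  have hlint : ∀ i ∈ I, ∀ t ∈ Finset.Icc 1 T, ∀ a,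
      Integrable (fun ω => S i t * l i t ω a) μ := fun i hi t ht a =>
    integrable_of_ae_mem_Icc
      (((hl i hi t ht a).mono (𝔉.le t) le_rfl).const_mul _).aestronglyMeasurable (hlL i hi t ht a)
  refine ofReal_one_sub_le_measure_sum_gain_le hη hδ hw₀
    (fun i hi => integrable_expWeight_discountedGain hη.le (hX i hi) (hXL i hi) (hY i hi)
      (hYL i hi))
    (integral_sum_expWeight_le hη.le hL (fun i hi => (hw₀ i hi).le) hX hXL hY hYL fun t ht => ?_)
  have hzero := sum_mul_condExp_eq_zero_of_stationary (𝔉.le (t - 1)) (hp t ht) (hpΔ t ht)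
    (fun i hi => hq i hi t ht) (fun i hi => hqΔ i hi t ht) (fun i hi => hlint i hi t ht)
    (fun i hi => hℓ i hi t ht) (hstat t ht)
  exact hzero.mono fun _ h => h.le

lemma sum_mul_sub_apply_le_of_sum_discountedGain_le {M : ℕ → ℝ} {w η L C : ℝ}
    {p l : ℕ → Ω → Fin A → ℝ} {T : ℕ} {ω : Ω} {a : Fin A} (hw : 0 < w)
    (hM : ∀ t ∈ Finset.Icc 1 T, 0 ≤ M t)
    (hp : ∀ t ∈ Finset.Icc 1 T, p t ω ∈ stdSimplex ℝ (Fin A))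
    (hl : ∀ t ∈ Finset.Icc 1 T, ∀ a, 0 ≤ l t ω a)
    (h : ∑ t ∈ Finset.Icc 1 T, discountedGain η L (scaledLoss (fun t => w * M t) p l)
        (scaledLoss (fun t => w * M t) (fun t ω => pushf (Function.const (Fin A) a) (p t ω)) l) t ω
      ≤ C / η) :
    ∑ t ∈ Finset.Icc 1 T, M t * (ip (p t ω) (l t ω) - l t ω a)
      ≤ η * L * ∑ t ∈ Finset.Icc 1 T, M t * ip (p t ω) (l t ω) + C / (η * w) := by
  have hMip : ∀ t ∈ Finset.Icc 1 T, 0 ≤ M t * ip (p t ω) (l t ω) := fun t ht =>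
    mul_nonneg (hM t ht) (ip_nonneg (hp t ht).1 (hl t ht))
  refine sum_mul_sub_le_of_sum_discounted_le hw hMip (h.trans_eq' ?_)
  exact Finset.sum_congr rfl fun t ht => by
    rw [discountedGain, scaledLoss, scaledLoss, ip_pushf_const a (hp t ht)]

end ScaledLoss

lemma card_PsiE (A : ℕ) : (PsiE A).card = A := by
  rw [PsiE, Finset.card_image_of_injective _ fun a _ h => congrFun h a, Finset.card_fin]

lemma sum_prior_weight {A : ℕ} {B : Type*} [DecidableEq B] {Bs Be : Finset B}
    (hdisj : Disjoint Bs Be) :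
    ∑ i ∈ Bs ×ˢ (Finset.univ : Finset (Fin A → Fin A)) ∪ Be ×ˢ PsiE A,
        (if i.1 ∈ Be then (A : ℝ) ^ A else A)
      = ((Bs.card : ℝ) + Be.card) * A * (A : ℝ) ^ A := by
  have hBs : ∀ i ∈ Bs ×ˢ (Finset.univ : Finset (Fin A → Fin A)),
      (if i.1 ∈ Be then (A : ℝ) ^ A else A) = A := fun i hi =>
    if_neg (Finset.disjoint_left.1 hdisj (Finset.mem_product.1 hi).1)
  have hBe : ∀ i ∈ Be ×ˢ PsiE A, (if i.1 ∈ Be then (A : ℝ) ^ A else A) = (A : ℝ) ^ A :=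
    fun i hi => if_pos (Finset.mem_product.1 hi).1
  rw [Finset.sum_union (Finset.disjoint_product.2 (.inl hdisj)), Finset.sum_congr rfl hBs,
    Finset.sum_congr rfl hBe]
  simp only [Finset.sum_const, Finset.card_product, Finset.card_univ, Fintype.card_pi_const,
    Fintype.card_fin, card_PsiE, nsmul_eq_mul, Nat.cast_mul, Nat.cast_pow]
  ring

/-- High-probability wide-range regret bound of stochastic wide-range Hedge (external
part): with probability at least `1 − p†`, simultaneously for all `b ∈ B^e` and all
actions `a`,
`∑_t M^t_b (⟨p^t, ℓ̃^t_b⟩ − ℓ̃^t_b(a))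
  ≤ η·L̄·∑_t M^t_b ⟨p^t, ℓ̃^t_b⟩ + log((|B^s|+|B^e|)·A/p†)/(η·w_b)`. -/
theorem stmt6
    (A : ℕ) (hA : 1 ≤ A)
    (B : Type) [Fintype B] [DecidableEq B]
    (Bs Be : Finset B) (hdisj : Disjoint Bs Be)
    (hBs : Bs.Nonempty) (hBe : Be.Nonempty)
    (ℐ : Finset (B × (Fin A → Fin A)))
    (hℐ : ℐ = Bs ×ˢ (Finset.univ : Finset (Fin A → Fin A)) ∪ Be ×ˢ PsiE A)
    {Ω : Type} [mΩ : MeasurableSpace Ω] (μ : Measure Ω) [IsProbabilityMeasure μ]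
    (𝔉 : Filtration ℕ mΩ)
    (T : ℕ) (hT : 1 ≤ T)
    (M : ℕ → B → ℝ) (hM : ∀ t ∈ Finset.Icc 1 T, ∀ b ∈ Bs ∪ Be, 0 ≤ M t b)
    (wb : B → ℝ) (hwb : ∀ b ∈ Bs ∪ Be, 0 < wb b)
    (Lbar η pdag : ℝ) (hL : 0 < Lbar) (hη : 0 < η) (hpdag : 0 < pdag ∧ pdag < 1)
    (ℓt : ℕ → B → Ω → Fin A → ℝ)
    (hℓtmeas : ∀ t ∈ Finset.Icc 1 T, ∀ b ∈ Bs ∪ Be, ∀ a,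
      Measurable[𝔉 t] fun ω => ℓt t b ω a)
    (hℓtnonneg : ∀ t ∈ Finset.Icc 1 T, ∀ b ∈ Bs ∪ Be, ∀ ω, ∀ a, 0 ≤ ℓt t b ω a)
    (hbd : ∀ t ∈ Finset.Icc 1 T, ∀ b ∈ Bs ∪ Be, ∀ a : Fin A,
      ∀ᵐ ω ∂μ, (wb b * M t b) * ℓt t b ω a ≤ Lbar)
    (ℓ : ℕ → Ω → Fin A → ℝ)
    (hℓmeas : ∀ t ∈ Finset.Icc 1 T, ∀ a, Measurable[𝔉 (t - 1)] fun ω => ℓ t ω a)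
    (hcond : ∀ t ∈ Finset.Icc 1 T, ∀ b ∈ Bs ∪ Be, ∀ a : Fin A,
      μ[(fun ω => ℓt t b ω a)|𝔉 (t - 1)] =ᵐ[μ] fun ω => ℓ t ω a)
    (p : ℕ → Ω → Fin A → ℝ)
    (hpmeas : ∀ t ∈ Finset.Icc 1 T, ∀ a, Measurable[𝔉 (t - 1)] fun ω => p t ω a)
    (hpprob : ∀ t ∈ Finset.Icc 1 T, ∀ ω, (∀ a, 0 ≤ p t ω a) ∧ ∑ a, p t ω a = 1)
    (W : ℕ → Ω → B × (Fin A → Fin A) → ℝ)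
    (hW : ∀ t ω, ∀ bψ : B × (Fin A → Fin A), W t ω bψ =
      (if bψ.1 ∈ Be then (A : ℝ) ^ (A : ℕ) else (A : ℝ)) *
        Real.exp (η * ∑ s ∈ Finset.Icc 1 t,
          (Real.exp (-η * Lbar) * (wb bψ.1 * M s bψ.1) * ip (p s ω) (ℓt s bψ.1 ω)
            - (wb bψ.1 * M s bψ.1) * ip (pushf bψ.2 (p s ω)) (ℓt s bψ.1 ω))))
    (hstat : ∀ t ∈ Finset.Icc 1 T, ∀ᵐ ω ∂μ, ∀ a : Fin A,
      ∑ bψ ∈ ℐ, W (t - 1) ω bψ * (wb bψ.1 * M t bψ.1) * p t ω a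
        = ∑ bψ ∈ ℐ, W (t - 1) ω bψ * (wb bψ.1 * M t bψ.1) * pushf bψ.2 (p t ω) a) :
    ENNReal.ofReal (1 - pdag) ≤
      μ {ω | ∀ b ∈ Be, ∀ a : Fin A,
        ∑ t ∈ Finset.Icc 1 T,
            M t b * (ip (p t ω) (ℓt t b ω) - ℓt t b ω a)
          ≤ η * Lbar * ∑ t ∈ Finset.Icc 1 T, M t b * ip (p t ω) (ℓt t b ω)
            + Real.log (((Bs.card : ℝ) + (Be.card : ℝ)) * (A : ℝ) / pdag)
              / (η * wb b)} := by
  have : (0 : ℝ) < A := Nat.cast_pos.2 hA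
  have hmem : ∀ i ∈ ℐ, i.1 ∈ Bs ∪ Be := by grind
  refine (ofReal_one_sub_le_measure_sum_discountedGain_le
    (w₀ := fun i => if i.1 ∈ Be then (A : ℝ) ^ A else A) (S := fun i t => wb i.1 * M t i.1)
    (q := fun i t ω => pushf i.2 (p t ω)) (l := fun i t => ℓt t i.1) hη hL hpdag.1
    (fun i _ => by split_ifs <;> positivity) hpmeas hpprob
    (fun i _ t ht => measurable_pushf i.2 (hpmeas t ht))
    (fun i _ t ht ω => pushf_mem_stdSimplex i.2 (hpprob t ht ω))
    (fun i hi t ht => hℓtmeas t ht i.1 (hmem i hi))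
    (fun i hi t ht a => (hbd t ht i.1 (hmem i hi) a).mono fun ω hω =>
      ⟨mul_nonneg (mul_nonneg (hwb _ (hmem i hi)).le (hM t ht _ (hmem i hi)))
        (hℓtnonneg t ht _ (hmem i hi) ω a), hω⟩)
    (fun i hi t ht => hcond t ht i.1 (hmem i hi)) fun t ht => ?_).trans
    (measure_mono fun ω hω b hb a => ?_)
  · simpa only [hW, expWeight, discountedGain, scaledLoss, mul_assoc] using hstat t ht
  have hb' : b ∈ Bs ∪ Be := mem_union_right _ hb
  have hgain := hω (b, Function.const (Fin A) a) (by simp [hℐ, hb, PsiE])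
  rw [hℐ, sum_prior_weight hdisj, if_pos hb, mul_div_mul_right _ _ (by positivity)] at hgain
  exact sum_mul_sub_apply_le_of_sum_discountedGain_le (hwb b hb') (fun t ht => hM t ht b hb')
    (fun t ht => hpprob t ht ω) (fun t ht => hℓtnonneg t ht b hb' ω) hgain
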